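/- Let a > 1 and q > 1. Suppose 𝓰 : [1,∞) → [0,∞) is nonincreasing, right-continuous, with finite Stieltjes moments, and that for all t ≥ 1, −∫_t^∞ s^{q−1} d𝓰(s) ≤ a t^{q−1} 𝓰(t). Then for every p with q ≤ p < q + (q−1)/(a−1) (equivalently a(p−q) < p−1), the moment −∫_1^∞ t^{p−1} d𝓰(t) is finite and satisfies −∫_1^∞ t^{p−1} d𝓰(t) ≤ (q−1)/((p−1)−a(p−q)) · (−∫_1^∞ t^{q−1} d𝓰(t)). -/

import Mathlib

open MeasureTheory Set Filter

lemma aux_A (r m : ℝ) (hr : 0 < r) (hm : 1 ≤ m) :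
    ∫⁻ s in Ioo 1 m, ENNReal.ofReal (r * s ^ (r - 1)) = ENNReal.ofReal (m ^ r - 1) := by
  have hii : IntervalIntegrable (fun s : ℝ => r * s ^ (r - 1)) volume 1 m :=
    (intervalIntegral.intervalIntegrable_rpow' (by linarith)).const_mul r
  rw [restrict_Ioo_eq_restrict_Ioc, ← ofReal_integral_eq_lintegral_ofReal]
  · rw [← intervalIntegral.integral_of_le hm, intervalIntegral.integral_const_mul,
      integral_rpow (Or.inl (by linarith))]
    congr 1
    simp only [sub_add_cancel, Real.one_rpow]
    field_simp
  · exact (intervalIntegrable_iff_integrableOn_Ioc_of_le hm).1 hii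
  · filter_upwards [ae_restrict_mem measurableSet_Ioc] with s hs
    have : 0 < s := by linarith [hs.1]
    positivity

lemma aux_B (μ : Measure ℝ) [SFinite (μ.restrict (Ioi 1))] (w : ℝ → ENNReal) (hw : Measurable w)
    (r N : ℝ) (hr : 0 < r) (hN : 1 ≤ N) :
    ∫⁻ t in Ioi 1, w t * ENNReal.ofReal ((min t N) ^ r - 1) ∂μ =
      ∫⁻ s in Ioo 1 N, ENNReal.ofReal (r * s ^ (r - 1)) * ∫⁻ t in Ioi s, w t ∂μ := by
  have hE : MeasurableSet {x : ℝ × ℝ | x.2 < x.1} := measurableSet_lt measurable_snd measurable_fst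
  let F : ℝ × ℝ → ENNReal := {x : ℝ × ℝ | x.2 < x.1}.indicator
    (fun x => w x.1 * ENNReal.ofReal (r * x.2 ^ (r - 1)))
  have hF : Measurable F := by
    apply Measurable.indicator _ hE
    fun_prop
  have h1 : ∀ t ∈ Ioi (1:ℝ), w t * ENNReal.ofReal ((min t N) ^ r - 1) =
      ∫⁻ s in Ioo 1 N, F (t, s) := by
    intro t ht
    rw [← aux_A r (min t N) hr (le_min (le_of_lt ht) hN), ← lintegral_const_mul _ (by fun_prop)]
    have : Ioo 1 (min t N) = Iio t ∩ Ioo 1 N := by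
      ext s; simp only [mem_Ioo, mem_inter_iff, mem_Iio, lt_min_iff]; tauto
    rw [this, ← Measure.restrict_restrict measurableSet_Iio, ← lintegral_indicator measurableSet_Iio]
    rfl
  have h2 : ∀ s ∈ Ioo (1:ℝ) N, ENNReal.ofReal (r * s ^ (r - 1)) * ∫⁻ t in Ioi s, w t ∂μ =
      ∫⁻ t in Ioi 1, F (t, s) ∂μ := by
    intro s hs
    rw [← lintegral_const_mul _ hw]
    have : Ioi s = Ioi s ∩ Ioi 1 := by
      rw [Ioi_inter_Ioi, sup_eq_left.2 hs.1.le]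
    rw [this, ← Measure.restrict_restrict measurableSet_Ioi, ← lintegral_indicator measurableSet_Ioi]
    congr 1
    ext t
    simp only [F, indicator, mem_Ioi, mem_ofPred_eq, mul_comm]
  rw [setLIntegral_congr_fun measurableSet_Ioi h1, setLIntegral_congr_fun measurableSet_Ioo h2]
  exact lintegral_lintegral_swap (f := fun t s => F (t, s)) hF.aemeasurable

lemma aux_C (J I K : ENNReal) (g a p q : ℝ) (hq : 1 < q) (ha : 1 < a) (hg : 0 ≤ g)
    (hpq : q < p) (hpa : a * (p - q) < p - 1) (hJ : J ≠ ⊤) (hI : I ≠ ⊤)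
    (h1 : J ≤ I + ENNReal.ofReal (a * (p - q) / (p - 1)) * K)
    (h2 : K + ENNReal.ofReal g ≤ J) (h3 : I ≤ ENNReal.ofReal (a * g)) :
    J ≤ ENNReal.ofReal ((q - 1) / ((p - 1) - a * (p - q))) * I := by
  have hK : K ≠ ⊤ := ne_top_of_le_ne_top hJ (le_self_add.trans h2)
  have hc : 0 ≤ a * (p - q) / (p - 1) :=
    div_nonneg (mul_nonneg (by linarith) (by linarith)) (by linarith)
  lift J to NNReal using hJ
  lift I to NNReal using hI
  lift K to NNReal using hK
  have e : ∀ x : NNReal, (x : ENNReal) = ENNReal.ofReal (x : ℝ) := fun x => by simp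
  have hJ0 : (0:ℝ) ≤ (J : ℝ) := J.coe_nonneg
  have hI0 : (0:ℝ) ≤ (I : ℝ) := I.coe_nonneg
  have hK0 : (0:ℝ) ≤ (K : ℝ) := K.coe_nonneg
  rw [e J, e I, e K, ← ENNReal.ofReal_mul hc, ← ENNReal.ofReal_add hI0 (mul_nonneg hc hK0),
    ENNReal.ofReal_le_ofReal_iff (add_nonneg hI0 (mul_nonneg hc hK0))] at h1
  rw [e J, e K, ← ENNReal.ofReal_add hK0 hg, ENNReal.ofReal_le_ofReal_iff hJ0] at h2
  rw [e I, ENNReal.ofReal_le_ofReal_iff (by positivity)] at h3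
  have hd : 0 < (p - 1) - a * (p - q) := by linarith
  rw [e J, e I, ← ENNReal.ofReal_mul (div_nonneg (by linarith) hd.le)]
  apply ENNReal.ofReal_le_ofReal
  rw [div_mul_eq_mul_div, le_div_iff₀ hd]
  have hp : 0 < p - 1 := by linarith
  have h4 : (J : ℝ) * (p - 1) ≤ I * (p - 1) + a * (p - q) * K := by
    have := mul_le_mul_of_nonneg_right h1 hp.le
    have e2 : ((I : ℝ) + a * (p - q) / (p - 1) * K) * (p - 1) = I * (p - 1) + a * (p - q) * K := by
      field_simp
    linarith
  have h5 : a * (p - q) * (K + g) ≤ a * (p - q) * J :=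
    mul_le_mul_of_nonneg_left h2 (mul_nonneg (by linarith) (by linarith))
  have h6 : (p - q) * I ≤ (p - q) * (a * g) := mul_le_mul_of_nonneg_left h3 (by linarith)
  linarith

theorem stmt18 (G : ℝ → ℝ) (q a : ℝ) (hq : 1 < q) (ha : 1 < a)
    (hGpos : ∀ t, 1 ≤ t → 0 ≤ G t)
    (hGanti : AntitoneOn G (Ici 1))
    (hGrc : ∀ t, 1 ≤ t → ContinuousWithinAt G (Ici t) t)
    (hGlim : Tendsto G atTop (nhds 0))
    (hGlim' : Tendsto (fun t => t ^ (q - 1) * G t) atTop (nhds 0))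
    -- `μG` is the Lebesgue–Stieltjes measure of `-G`, so that
    -- `∫ f ∂μG = -∫ f dG` as a Stieltjes integral.
    (μG : Measure ℝ)
    (hμG : ∀ s t : ℝ, 1 ≤ s → s ≤ t → μG (Ioc s t) = ENNReal.ofReal (G s - G t))
    -- finiteness of the q-moment
    (hqfin : ∫⁻ t in Ioi 1, ENNReal.ofReal (t ^ (q - 1)) ∂μG ≠ ⊤)
    -- the reverse Hölder inequality on level sets
    (hmain : ∀ t : ℝ, 1 ≤ t →
      ∫⁻ s in Ioi t, ENNReal.ofReal (s ^ (q - 1)) ∂μG ≤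
        ENNReal.ofReal (a * t ^ (q - 1) * G t))
    (p : ℝ) (hpq : q ≤ p) (hpa : a * (p - q) < p - 1) :
    (∫⁻ t in Ioi 1, ENNReal.ofReal (t ^ (p - 1)) ∂μG ≠ ⊤) ∧
      ∫⁻ t in Ioi 1, ENNReal.ofReal (t ^ (p - 1)) ∂μG ≤
        ENNReal.ofReal ((q - 1) / ((p - 1) - a * (p - q))) *
          ∫⁻ t in Ioi 1, ENNReal.ofReal (t ^ (q - 1)) ∂μG := by
  have hIoi : ∀ s, 1 ≤ s → μG (Ioi s) = ENNReal.ofReal (G s) := by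
    intro s hs
    have h1 : Tendsto (fun t => μG (Ioc s t)) atTop (nhds (μG (Ioi s))) := by
      rw [← iUnion_Ioc_right s]
      exact tendsto_measure_iUnion_atTop (fun x y hxy => Ioc_subset_Ioc_right hxy)
    have h2 : Tendsto (fun t => ENNReal.ofReal (G s - G t)) atTop
        (nhds (ENNReal.ofReal (G s - 0))) :=
      ENNReal.tendsto_ofReal (tendsto_const_nhds.sub hGlim)
    rw [sub_zero] at h2
    refine tendsto_nhds_unique h1 (h2.congr' ?_)
    filter_upwards [eventually_ge_atTop s] with t ht
    exact (hμG s t hs ht).symm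
  have : IsFiniteMeasure (μG.restrict (Ioi 1)) := by
    refine ⟨?_⟩
    rw [Measure.restrict_apply_univ, hIoi 1 le_rfl]
    exact ENNReal.ofReal_lt_top
  rcases hpq.eq_or_lt with rfl | hlt
  · refine ⟨hqfin, ?_⟩
    have : (q - 1) / ((q - 1) - a * (q - q)) = 1 := by
      rw [sub_self, mul_zero, sub_zero, div_self (by linarith)]
    rw [this]; simp
  have key : ∫⁻ t in Ioi 1, ENNReal.ofReal (t ^ (p - 1)) ∂μG ≤
        ENNReal.ofReal ((q - 1) / ((p - 1) - a * (p - q))) *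
          ∫⁻ t in Ioi 1, ENNReal.ofReal (t ^ (q - 1)) ∂μG := by
    have trunc : ∀ N : ℝ, 1 ≤ N →
        ∫⁻ t in Ioi 1, ENNReal.ofReal (t ^ (q - 1)) * ENNReal.ofReal ((min t N) ^ (p - q)) ∂μG ≤
        ENNReal.ofReal ((q - 1) / ((p - 1) - a * (p - q))) *
          ∫⁻ t in Ioi 1, ENNReal.ofReal (t ^ (q - 1)) ∂μG := by
      intro N hN
      refine aux_C _ _ (∫⁻ t in Ioi 1, 1 * ENNReal.ofReal ((min t N) ^ (p - 1) - 1) ∂μG) (G 1)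
        a p q hq ha (hGpos 1 le_rfl) hlt hpa ?_ hqfin ?_ ?_ ?_
      · have : ∫⁻ t in Ioi 1, ENNReal.ofReal (t ^ (q - 1)) *
            ENNReal.ofReal ((min t N) ^ (p - q)) ∂μG ≤
            ∫⁻ t in Ioi 1, ENNReal.ofReal (t ^ (q - 1)) * ENNReal.ofReal (N ^ (p - q)) ∂μG := by
          apply setLIntegral_mono (by fun_prop)
          intro t ht
          have ht' : (1:ℝ) < t := ht
          refine mul_le_mul_right (ENNReal.ofReal_le_ofReal ?_) _
          exact Real.rpow_le_rpow (le_min (by linarith) (by linarith)) (min_le_right _ _)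
            (sub_nonneg.2 hpq)
        refine ne_top_of_le_ne_top ?_ this
        rw [lintegral_mul_const _ (by fun_prop)]
        exact ENNReal.mul_ne_top hqfin ENNReal.ofReal_ne_top
      · have e1 : ∫⁻ t in Ioi 1, ENNReal.ofReal (t ^ (q - 1)) *
            ENNReal.ofReal ((min t N) ^ (p - q)) ∂μG =
            ∫⁻ t in Ioi 1, (ENNReal.ofReal (t ^ (q - 1)) + ENNReal.ofReal (t ^ (q - 1)) *
            ENNReal.ofReal ((min t N) ^ (p - q) - 1)) ∂μG := by
          apply setLIntegral_congr_fun measurableSet_Ioi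
          intro t ht
          have ht' : (1:ℝ) < t := ht
          have h1 : 1 ≤ (min t N) ^ (p - q) :=
            Real.one_le_rpow (le_min ht'.le hN) (by linarith)
          have : (min t N) ^ (p - q) = 1 + ((min t N) ^ (p - q) - 1) := by ring
          dsimp only
          conv_lhs => rw [this, ENNReal.ofReal_add zero_le_one (by linarith), mul_add,
            ENNReal.ofReal_one, mul_one]
        rw [e1, lintegral_add_left (by fun_prop), aux_B μG _ (by fun_prop) _ N (by linarith) hN,
          aux_B μG _ (by fun_prop) _ N (by linarith) hN]
        gcongr
        rw [← lintegral_const_mul' _ _ ENNReal.ofReal_ne_top]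
        apply setLIntegral_mono' measurableSet_Ioo
        intro s hs
        have hs0 : 0 < s := by linarith [hs.1]
        have hp : 0 < p - 1 := by linarith
        refine (mul_le_mul_right (hmain s hs.1.le) _).trans (le_of_eq ?_)
        have hpq0 : 0 ≤ p - q := by linarith
        rw [setLIntegral_const, one_mul, hIoi s hs.1.le, ← ENNReal.ofReal_mul (by positivity),
          ← ENNReal.ofReal_mul (by positivity), ← ENNReal.ofReal_mul (by positivity)]
        congr 1
        have : s ^ (p - 1 - 1) = s ^ (p - q - 1) * s ^ (q - 1) := by
          rw [← Real.rpow_add hs0]; congr 1; ring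
        rw [this]
        field_simp
      · have e2 : ENNReal.ofReal (G 1) = ∫⁻ t in Ioi 1, 1 ∂μG := by
          rw [setLIntegral_const, one_mul, hIoi 1 le_rfl]
        rw [e2, ← lintegral_add_right _ measurable_const]
        apply setLIntegral_mono' measurableSet_Ioi
        intro t ht
        have ht' : (1:ℝ) < t := ht
        have hm : 1 ≤ min t N := le_min ht'.le hN
        have h1 : 1 ≤ (min t N) ^ (p - 1) := Real.one_le_rpow hm (by linarith)
        rw [one_mul, ← ENNReal.ofReal_one, ← ENNReal.ofReal_add (by linarith) zero_le_one,
          ← ENNReal.ofReal_mul (by positivity)]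
        apply ENNReal.ofReal_le_ofReal
        have : (min t N) ^ (p - 1) = (min t N) ^ (q - 1) * (min t N) ^ (p - q) := by
          rw [← Real.rpow_add (by linarith)]; congr 1; ring
        rw [sub_add_cancel, this]
        apply mul_le_mul_of_nonneg_right _ (by positivity)
        exact Real.rpow_le_rpow (by linarith) (min_le_left _ _) (by linarith)
      · simpa using hmain 1 le_rfl
    have hfat := lintegral_liminf_le (μ := μG.restrict (Ioi 1)) (u := atTop)
      (f := fun (n : ℕ) (t : ℝ) => ENNReal.ofReal (t ^ (q - 1)) *
        ENNReal.ofReal ((min t (n + 1 : ℝ)) ^ (p - q))) (fun n => by fun_prop)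
    have e3 : ∫⁻ t in Ioi 1, ENNReal.ofReal (t ^ (p - 1)) ∂μG =
        ∫⁻ t in Ioi 1, liminf (fun n : ℕ => ENNReal.ofReal (t ^ (q - 1)) *
        ENNReal.ofReal ((min t (n + 1 : ℝ)) ^ (p - q))) atTop ∂μG := by
      apply setLIntegral_congr_fun measurableSet_Ioi
      intro t ht
      have ht' : (1:ℝ) < t := ht
      refine (Tendsto.liminf_eq ?_).symm
      apply tendsto_const_nhds.congr'
      obtain ⟨n0, hn0⟩ := exists_nat_ge t
      filter_upwards [eventually_ge_atTop n0] with n hn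
      have : (n0 : ℝ) ≤ n := by exact_mod_cast hn
      rw [min_eq_left (by linarith), ← ENNReal.ofReal_mul (by positivity),
        ← Real.rpow_add (by linarith)]
      congr 2; ring
    rw [e3]
    refine hfat.trans ?_
    refine (liminf_le_liminf (Eventually.of_forall
      (fun n : ℕ => trunc (n + 1) (by linarith [n.cast_nonneg (α := ℝ)])))).trans ?_
    simp
  exact ⟨ne_top_of_le_ne_top (ENNReal.mul_ne_top ENNReal.ofReal_ne_top hqfin) key, key⟩
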